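/- For every i ∈ {1, 2, 3, …} ∪ {∞}: the normal closure N(i) of R(i) in F is contained in H(0), and ψ₀(N(i)) ⊆ N(i) × N(i). Consequently, ψ₀ induces a well-defined homomorphism ψ_i : H(i) → Γ(i) × Γ(i) on the image H(i) of H(0) in Γ(i) = F/N(i). -/

import Mathlib

/-- The four-letter alphabet `{a, b, c, d}`. -/
inductive L4 : Type
  | a | b | c | d
  deriving DecidableEq

/-- The free group `F = F(a, b, c, d)`. -/
abbrev F4 : Type := FreeGroup L4

def ga : F4 := FreeGroup.of L4.a
def gb : F4 := FreeGroup.of L4.b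
def gc : F4 := FreeGroup.of L4.c
def gd : F4 := FreeGroup.of L4.d

/-- The endomorphism `σ` of `F(a,b,c,d)`:
`σ(a) = aca`, `σ(b) = d`, `σ(c) = b`, `σ(d) = c`. -/
def sigma : F4 →* F4 :=
  FreeGroup.lift fun x => match x with
    | L4.a => ga * gc * ga
    | L4.b => gd
    | L4.c => gb
    | L4.d => gc

/-- A seven-letter alphabet corresponding to the free generators
`b, c, d, aba, aca, ada, a²` of the index-2 subgroup `H(0)` of `F`. -/
inductive E7 : Type
  | eb | ec | ed | eaba | eaca | eada | eaa
  deriving DecidableEq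

/-- The embedding of the free group on the seven generators into `F`, sending
the generators to `b, c, d, aba, aca, ada, a²`; its range is `H(0)`. -/
def iota : FreeGroup E7 →* F4 :=
  FreeGroup.lift fun x => match x with
    | E7.eb => gb
    | E7.ec => gc
    | E7.ed => gd
    | E7.eaba => ga * gb * ga
    | E7.eaca => ga * gc * ga
    | E7.eada => ga * gd * ga
    | E7.eaa => ga ^ 2

/-- The homomorphism `ψ₀ : H(0) → F × F` (written on the free generators of
`H(0)`): `ψ₀(b) = (a,c)`, `ψ₀(c) = (a,d)`, `ψ₀(d) = (1,b)`, `ψ₀(aba) = (c,a)`,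
`ψ₀(aca) = (d,a)`, `ψ₀(ada) = (b,1)`, `ψ₀(a²) = (1,1)`. -/
def psi : FreeGroup E7 →* F4 × F4 :=
  FreeGroup.lift fun x => match x with
    | E7.eb => (ga, gc)
    | E7.ec => (ga, gd)
    | E7.ed => (1, gb)
    | E7.eaba => (gc, ga)
    | E7.eaca => (gd, ga)
    | E7.eada => (gb, 1)
    | E7.eaa => (1, 1)

/-- The relator set `R(i)` of the presentation `Γ(i)`, `1 ≤ i < ∞`:
`R(1) = {a², b², c², d², bcd, (ad)⁴}` and, for `i ≥ 2`,
`R(i) = R(1) ∪ {σʲ((ad)⁴) : 1 ≤ j ≤ i−1} ∪ {σʲ((adacac)⁴) : 0 ≤ j ≤ i−2}`. -/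
def Rpres (i : ℕ) : Set F4 :=
  {ga ^ 2, gb ^ 2, gc ^ 2, gd ^ 2, gb * gc * gd, (ga * gd) ^ 4}
    ∪ {w | ∃ j : ℕ, 1 ≤ j ∧ j + 1 ≤ i ∧ w = (⇑sigma)^[j] ((ga * gd) ^ 4)}
    ∪ {w | ∃ j : ℕ, j + 2 ≤ i ∧ w = (⇑sigma)^[j] ((ga * gd * ga * gc * ga * gc) ^ 4)}

/-- The Lysenok relator set
`R(∞) = {a², b², c², d², bcd} ∪ {σⁱ((ad)⁴) : i ≥ 0} ∪ {σⁱ((adacac)⁴) : i ≥ 0}`. -/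
def Rinf : Set F4 :=
  {ga ^ 2, gb ^ 2, gc ^ 2, gd ^ 2, gb * gc * gd}
    ∪ {w | ∃ i : ℕ, w = (⇑sigma)^[i] ((ga * gd) ^ 4)}
    ∪ {w | ∃ i : ℕ, w = (⇑sigma)^[i] ((ga * gd * ga * gc * ga * gc) ^ 4)}

/-- The assertion of STATEMENT 9 for a relator set `Rel`: the normal closure
`N` of `Rel` is contained in `H(0) = iota.range`, `ψ₀` maps `N` into `N × N`,
and consequently `ψ₀` induces a homomorphism `H(i) → Γ(i) × Γ(i)` on the image
`H(i)` of `H(0)` in `Γ(i) = F/N`. -/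
def PsiDescends (Rel : Set F4) : Prop :=
  (Subgroup.normalClosure Rel : Set F4) ⊆ (iota.range : Set F4) ∧
  (∀ e : FreeGroup E7, iota e ∈ Subgroup.normalClosure Rel →
     psi e ∈ (Subgroup.normalClosure Rel).prod (Subgroup.normalClosure Rel)) ∧
  ∃ ψi : (iota.range.map (QuotientGroup.mk' (Subgroup.normalClosure Rel))) →*
           (F4 ⧸ Subgroup.normalClosure Rel) × (F4 ⧸ Subgroup.normalClosure Rel),
    ∀ e : FreeGroup E7,
      ψi ⟨QuotientGroup.mk' (Subgroup.normalClosure Rel) (iota e),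
          Subgroup.mem_map.mpr ⟨iota e, MonoidHom.mem_range.mpr ⟨e, rfl⟩, rfl⟩⟩ =
        (QuotientGroup.mk' (Subgroup.normalClosure Rel) (psi e).1,
         QuotientGroup.mk' (Subgroup.normalClosure Rel) (psi e).2)

/-!
Sending `a` to the coordinate swap of `Q × Q` and `b, c, d` to the pairs prescribed by `ψ₀` extends
`ψ₀`, read modulo a quotient `q : F → Q`, to a homomorphism `Φ` from all of `F` to the semidirect
product of `Q × Q` with its automorphisms. So it suffices that `Φ` kills the relators when
`Q = F / N`. For the initial relators this is a computation. For the others,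
`Φ (σ w) = (q (θ w), q w)` with `θ : F → ⟨a, d⟩`; the image of `⟨a, d⟩` in `Q` is a quotient of the
dihedral group of order 8, where every fourth power is trivial, so if `v ^ 4` dies in `Q` then `Φ`
kills `σ (v ^ 4)`. Finally `N ⊆ H(0)` because `H(0)` is the kernel of the parity of the number of
letters `a`.
-/

section GroupTheory

variable {G : Type*} [Group G]

theorem mem_or_mul_mem_of_mem_closure_insert {H : Subgroup G} {s w : G} {S : Set G}
    (hs : s ^ 2 ∈ H) (hS : ∀ x ∈ S, x ∈ H ∧ s * x * s ∈ H)
    (hw : w ∈ Subgroup.closure (insert s S)) : w ∈ H ∨ s * w ∈ H := by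
  induction hw using Subgroup.closure_induction_left with
  | one => exact .inl (one_mem H)
  | mul_left x hx v _ ih =>
    rcases hx with rfl | hx <;> rcases ih with hv | hv
    · exact .inr (by simpa only [sq, mul_assoc] using mul_mem hs hv)
    · exact .inl hv
    · exact .inl (mul_mem (hS x hx).1 hv)
    · have h : s * x * s * (s ^ 2)⁻¹ * (s * v) ∈ H :=
        mul_mem (mul_mem (hS x hx).2 (inv_mem hs)) hv
      exact .inr (by convert h using 1; group)
  | inv_mul_cancel x hx v _ ih =>
    rcases hx with rfl | hx <;> rcases ih with hv | hv
    · exact .inr (by rwa [mul_inv_cancel_left])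
    · have h : (x ^ 2)⁻¹ * (x * v) ∈ H := mul_mem (inv_mem hs) hv
      exact .inl (by convert h using 1; group)
    · exact .inl (mul_mem (inv_mem (hS x hx).1) hv)
    · have h : s ^ 2 * (s * x * s)⁻¹ * (s * v) ∈ H :=
        mul_mem (mul_mem hs (inv_mem (hS x hx).2)) hv
      exact .inr (by convert h using 1; group)

theorem mul_mul_zpow_mul_of_sq_eq_one {s t : G} (hs : s ^ 2 = 1) (ht : t ^ 2 = 1) (k : ℤ) :
    s * (s * t) ^ k * s = ((s * t) ^ k)⁻¹ := by
  have hs_inv : s⁻¹ = s := inv_eq_of_mul_eq_one_left (by rw [← sq, hs])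
  have ht_inv : t⁻¹ = t := inv_eq_of_mul_eq_one_left (by rw [← sq, ht])
  calc s * (s * t) ^ k * s = (s * (s * t) * s⁻¹) ^ k := by rw [conj_zpow, hs_inv]
    _ = ((s * t)⁻¹) ^ k := by
      rw [mul_inv_rev, ht_inv, hs_inv, ← mul_assoc, ← sq, hs, one_mul]
    _ = ((s * t) ^ k)⁻¹ := inv_zpow _ k

theorem mem_zpowers_or_mul_mem_zpowers_of_mem_closure_pair {s t w : G} (hs : s ^ 2 = 1)
    (ht : t ^ 2 = 1) (hw : w ∈ Subgroup.closure {s, t}) :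
    w ∈ Subgroup.zpowers (s * t) ∨ s * w ∈ Subgroup.zpowers (s * t) := by
  have hst : s * t ∈ Subgroup.zpowers (s * t) := Subgroup.mem_zpowers _
  have hconj : s * (s * t) * s ∈ Subgroup.zpowers (s * t) := by
    have h := mul_mul_zpow_mul_of_sq_eq_one hs ht 1
    rw [zpow_one] at h
    exact h ▸ inv_mem hst
  have hclosure : Subgroup.closure {s, t} ≤ Subgroup.closure {s, s * t} := by
    have hs_mem : s ∈ Subgroup.closure {s, s * t} := Subgroup.subset_closure (by simp)
    have hst_mem : s * t ∈ Subgroup.closure {s, s * t} := Subgroup.subset_closure (by simp)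
    rw [Subgroup.closure_le]
    rintro x (rfl | rfl)
    · exact hs_mem
    · exact (Subgroup.mul_mem_cancel_left _ hs_mem).mp hst_mem
  refine mem_or_mul_mem_of_mem_closure_insert (hs ▸ one_mem _) ?_ (hclosure hw)
  rintro x rfl
  exact ⟨hst, hconj⟩

theorem pow_eq_one_of_mem_closure_pair {s t w : G} {n : ℕ} (hs : s ^ 2 = 1) (ht : t ^ 2 = 1)
    (hst : (s * t) ^ n = 1) (hn : Even n) (hw : w ∈ Subgroup.closure {s, t}) : w ^ n = 1 := by
  rcases mem_zpowers_or_mul_mem_zpowers_of_mem_closure_pair hs ht hw with ⟨k, rfl⟩ | ⟨k, hk⟩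
  · rw [← zpow_natCast, zpow_comm, zpow_natCast, hst, one_zpow]
  · have w_eq : w = s * (s * t) ^ k := by
      rw [show (s * t) ^ k = s * w from hk, ← mul_assoc, ← sq, hs, one_mul]
    have w_sq : w ^ 2 = 1 := by
      rw [w_eq, sq, ← mul_assoc, mul_mul_zpow_mul_of_sq_eq_one hs ht, inv_mul_cancel]
    obtain ⟨m, rfl⟩ := hn.two_dvd
    rw [pow_mul, w_sq, one_pow]

theorem exists_monoidHom_map_range {E Q K : Type*} [Group E] [Group Q] [Group K] (ι : E →* G)
    (π : G →* Q) (f : E →* K) (h : (π.comp ι).ker ≤ f.ker) :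
    ∃ φ : ι.range.map π →* K, ∀ e, φ ⟨π (ι e), ι e, ⟨e, rfl⟩, rfl⟩ = f e := by
  let p : E →* ι.range.map π := (π.subgroupMap ι.range).comp ι.rangeRestrict
  have hp : Function.Surjective p :=
    (π.subgroupMap_surjective ι.range).comp ι.rangeRestrict_surjective
  have hker : p.ker ≤ f.ker := fun e he ↦ h (congrArg Subtype.val he)
  exact ⟨p.liftOfSurjective hp ⟨f, hker⟩, p.liftOfRightInverse_comp_apply _ _ ⟨f, hker⟩⟩

end GroupTheory

section Parity

/-- The parity of the number of letters `a^{±1}` in a word, written multiplicatively. -/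
def parity : F4 →* ℤˣ :=
  FreeGroup.lift fun x ↦ match x with
    | L4.a => -1
    | _ => 1

theorem closure_letters : Subgroup.closure {ga, gb, gc, gd} = ⊤ := by
  rw [eq_top_iff, ← FreeGroup.closure_range_of, Subgroup.closure_le]
  rintro _ ⟨x, rfl⟩
  refine Subgroup.subset_closure ?_
  cases x <;> simp [ga, gb, gc, gd]

theorem mem_range_iota_or_ga_mul_mem_range_iota (w : F4) :
    w ∈ iota.range ∨ ga * w ∈ iota.range := by
  have hw : w ∈ Subgroup.closure {ga, gb, gc, gd} := closure_letters ▸ Subgroup.mem_top w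
  refine mem_or_mul_mem_of_mem_closure_insert ⟨.of .eaa, by simp [iota]⟩ ?_ hw
  rintro x (rfl | rfl | rfl)
  · exact ⟨⟨.of .eb, by simp [iota]⟩, ⟨.of .eaba, by simp [iota]⟩⟩
  · exact ⟨⟨.of .ec, by simp [iota]⟩, ⟨.of .eaca, by simp [iota]⟩⟩
  · exact ⟨⟨.of .ed, by simp [iota]⟩, ⟨.of .eada, by simp [iota]⟩⟩

theorem range_iota_eq_ker_parity : iota.range = parity.ker := by
  have parity_iota : parity.comp iota = 1 := by
    ext x
    cases x <;> simp [iota, parity, ga, gb, gc, gd]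
  have range_le : iota.range ≤ parity.ker := by
    rintro _ ⟨e, rfl⟩
    exact DFunLike.congr_fun parity_iota e
  refine le_antisymm range_le fun w hw ↦ ?_
  refine (mem_range_iota_or_ga_mul_mem_range_iota w).resolve_right fun haw ↦ ?_
  have h : parity (ga * w) = 1 := range_le haw
  rw [map_mul, MonoidHom.mem_ker.mp hw] at h
  simp [parity, ga] at h

end Parity

section WreathRecursion

open SemidirectProduct

/-- The semidirect product of `Q × Q` with its whole automorphism group. It contains the wreath
product of `Q` with the group of order two, whose generator is the coordinate swap, and spares us
from choosing a model of that group and of its action. -/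
abbrev PairHolomorph (Q : Type*) [Group Q] : Type _ :=
  (Q × Q) ⋊[MonoidHom.id (MulAut (Q × Q))] MulAut (Q × Q)

variable {Q : Type*} [Group Q]

/-- The automorphism `(x, y) ↦ (y, x)` of `Q × Q`, as an element of the semidirect product. -/
def coordSwap (Q : Type*) [Group Q] : PairHolomorph Q :=
  inr (MulEquiv.prodComm : Q × Q ≃* Q × Q)

theorem coordSwap_mul_self : coordSwap Q * coordSwap Q = 1 := by
  rw [coordSwap, ← map_mul]
  exact map_one inr

theorem coordSwap_mul_inl_mul_coordSwap (x y : Q) :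
    coordSwap Q * inl (x, y) * coordSwap Q = inl (y, x) := by
  ext <;> simp [coordSwap]

/-- The extension of `ψ₀` from `H(0)` to `F`, with coordinates read through `q : F → Q`: the letter
`a` acts as the coordinate swap. -/
def wreathRecursion (q : F4 →* Q) : F4 →* PairHolomorph Q :=
  FreeGroup.lift fun x ↦ match x with
    | L4.a => coordSwap Q
    | L4.b => inl (q ga, q gc)
    | L4.c => inl (q ga, q gd)
    | L4.d => inl (1, q gb)

variable (q : F4 →* Q)

@[simp]
theorem wreathRecursion_ga : wreathRecursion q ga = coordSwap Q := by
  simp [wreathRecursion, ga]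

@[simp]
theorem wreathRecursion_gb : wreathRecursion q gb = inl (q ga, q gc) := by
  simp [wreathRecursion, gb]

@[simp]
theorem wreathRecursion_gc : wreathRecursion q gc = inl (q ga, q gd) := by
  simp [wreathRecursion, gc]

@[simp]
theorem wreathRecursion_gd : wreathRecursion q gd = inl (1, q gb) := by
  simp [wreathRecursion, gd]

theorem wreathRecursion_iota (e : FreeGroup E7) :
    wreathRecursion q (iota e) = inl (q (psi e).1, q (psi e).2) := by
  suffices h : (wreathRecursion q).comp iota = inl.comp ((q.prodMap q).comp psi) from
    DFunLike.congr_fun h e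
  refine FreeGroup.ext_hom _ _ fun x ↦ ?_
  cases x with
  | eaa =>
    simp only [MonoidHom.comp_apply, iota, psi, FreeGroup.lift_apply_of, wreathRecursion_ga, sq,
      map_mul, coordSwap_mul_self, Prod.mk_one_one, map_one]
  | _ => simp [iota, psi, coordSwap_mul_inl_mul_coordSwap]

/-- The first coordinate of `ψ₀ ∘ σ`, whose second coordinate is the identity of `F`. -/
def theta : F4 →* F4 :=
  FreeGroup.lift fun x ↦ match x with
    | L4.a => gd
    | L4.b => 1
    | L4.c => ga
    | L4.d => ga

theorem theta_mem_closure (w : F4) : theta w ∈ Subgroup.closure {ga, gd} := by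
  have hrange : theta.range ≤ Subgroup.closure {ga, gd} := by
    refine FreeGroup.range_lift_le ?_
    rintro _ ⟨x, rfl⟩
    cases x
    · exact Subgroup.subset_closure (by simp)
    · exact one_mem _
    all_goals exact Subgroup.subset_closure (by simp)
  exact hrange ⟨w, rfl⟩

theorem wreathRecursion_sigma (w : F4) :
    wreathRecursion q (sigma w) = inl (q (theta w), q w) := by
  suffices h : (wreathRecursion q).comp sigma = inl.comp ((q.comp theta).prod q) from
    DFunLike.congr_fun h w
  refine FreeGroup.ext_hom _ _ fun x ↦ ?_
  cases x <;>
    simp only [MonoidHom.comp_apply, MonoidHom.prod_apply, sigma, theta, FreeGroup.lift_apply_of,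
      map_mul, map_one, wreathRecursion_ga, wreathRecursion_gb, wreathRecursion_gc,
      wreathRecursion_gd, coordSwap_mul_inl_mul_coordSwap] <;>
    rfl

end WreathRecursion

section Relators

/-- The relators shared by every level: they present the free product of `⟨a⟩`, of order two, with
the Klein four-group `{1, b, c, d}`. -/
def basicRelators : Set F4 := {ga ^ 2, gb ^ 2, gc ^ 2, gd ^ 2, gb * gc * gd}

/-- The Lysenok relators with exponents restricted to given sets: the basic relators, the
`σʲ((ad)⁴)` with `j ∈ J` and the `σʲ((adacac)⁴)` with `j ∈ K`. -/
def lysenokRelators (J K : Set ℕ) : Set F4 :=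
  basicRelators ∪ (fun j ↦ sigma^[j] ((ga * gd) ^ 4)) '' J
    ∪ (fun j ↦ sigma^[j] ((ga * gd * ga * gc * ga * gc) ^ 4)) '' K

theorem Rinf_eq_lysenokRelators : Rinf = lysenokRelators Set.univ Set.univ := by
  simp only [Rinf, lysenokRelators, basicRelators, Set.image_univ, Set.range, eq_comm]

theorem Rpres_eq_lysenokRelators {i : ℕ} (hi : 1 ≤ i) :
    Rpres i = lysenokRelators (Set.Iio i) {j | j + 2 ≤ i} := by
  have Iio_eq : Set.Iio i = insert 0 {j | 1 ≤ j ∧ j + 1 ≤ i} := by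
    ext j
    simp only [Set.mem_Iio, Set.mem_insert_iff, Set.mem_ofPred_eq]
    lia
  rw [lysenokRelators, Iio_eq, Set.image_insert_eq]
  ext w
  simp only [Rpres, basicRelators, Set.image, Set.mem_union, Set.mem_insert_iff,
    Set.mem_singleton_iff, Set.mem_ofPred_eq, Function.iterate_zero_apply, and_assoc, eq_comm,
    or_assoc]

theorem parity_eq_one_of_mem_lysenokRelators {J K : Set ℕ} {w : F4}
    (hw : w ∈ lysenokRelators J K) : parity w = 1 := by
  have parity_iterate (j : ℕ) (v : F4) : parity (sigma^[j] (v ^ 4)) = 1 := by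
    rw [iterate_map_pow, map_pow, Int.units_pow_eq_pow_mod_two, pow_zero]
  rcases hw with (hw | ⟨j, -, rfl⟩) | ⟨j, -, rfl⟩
  · rcases hw with rfl | rfl | rfl | rfl | rfl <;> simp [parity, ga, gb, gc, gd]
  · exact parity_iterate j _
  · exact parity_iterate j _

end Relators

section RelatorImages

open SemidirectProduct

variable {Q : Type*} [Group Q] {q : F4 →* Q}

theorem wreathRecursion_eq_one_of_mem_basicRelators (hq : ∀ w ∈ basicRelators, q w = 1) :
    ∀ w ∈ basicRelators, wreathRecursion q w = 1 := by
  simp only [basicRelators, Set.mem_insert_iff, Set.mem_singleton_iff, forall_eq_or_imp, forall_eq,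
    map_pow, map_mul] at hq ⊢
  obtain ⟨ha, hb, hc, hd, hbcd⟩ := hq
  have hcdb : q gc * q gd * q gb = 1 := by rwa [mul_assoc, mul_eq_one_comm] at hbcd
  refine ⟨?_, ?_, ?_, ?_, ?_⟩
  · rw [wreathRecursion_ga, sq, coordSwap_mul_self]
  · rw [wreathRecursion_gb, ← map_pow, Prod.pow_mk, ha, hc, Prod.mk_one_one, map_one]
  · rw [wreathRecursion_gc, ← map_pow, Prod.pow_mk, ha, hd, Prod.mk_one_one, map_one]
  · rw [wreathRecursion_gd, ← map_pow, Prod.pow_mk, one_pow, hb, Prod.mk_one_one, map_one]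
  · rw [wreathRecursion_gb, wreathRecursion_gc, wreathRecursion_gd, ← map_mul, ← map_mul,
      Prod.mk_mul_mk, Prod.mk_mul_mk, mul_one, ← sq, ha, hcdb, Prod.mk_one_one, map_one]

theorem wreathRecursion_ad_pow_four (hb : q gb ^ 2 = 1) :
    wreathRecursion q ((ga * gd) ^ 4) = 1 := by
  have ad_sq : (ga * gd) ^ 2 = iota (.of .eada * .of .ed) := by
    simp [iota, sq, mul_assoc]
  have recursion_ad_sq : wreathRecursion q ((ga * gd) ^ 2) = inl (q gb, q gb) := by
    rw [ad_sq, wreathRecursion_iota]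
    simp [psi]
  rw [pow_mul (ga * gd) 2 2, map_pow, recursion_ad_sq, ← map_pow, Prod.pow_mk, hb,
    Prod.mk_one_one, map_one]

theorem wreathRecursion_adacac_pow_four (ha : q ga ^ 2 = 1) (hb : q gb ^ 2 = 1)
    (hd : q gd ^ 2 = 1) : wreathRecursion q ((ga * gd * ga * gc * ga * gc) ^ 4) = 1 := by
  have ha_inv : (q ga)⁻¹ = q ga := inv_eq_of_mul_eq_one_left (by rw [← sq, ha])
  have hd_inv : (q gd)⁻¹ = q gd := inv_eq_of_mul_eq_one_left (by rw [← sq, hd])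
  have adacac_sq : (ga * gd * ga * gc * ga * gc) ^ 2 =
      iota (.of .eada * .of .ec * .of .eaca * .of .ed * .of .eaca * .of .ec) := by
    simp [iota, sq, mul_assoc]
  have recursion_adacac_sq : wreathRecursion q ((ga * gd * ga * gc * ga * gc) ^ 2) =
      inl (q gb, q gd * q ga * q gb * (q gd * q ga)⁻¹) := by
    rw [adacac_sq, wreathRecursion_iota, mul_inv_rev, ha_inv, hd_inv]
    have adda_eq_one : q ga * (q gd * (q gd * q ga)) = 1 := by
      rw [← mul_assoc (q gd), ← sq, hd, one_mul, ← sq, ha]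
    simp [psi, adda_eq_one, mul_assoc]
  rw [pow_mul _ 2 2, map_pow, recursion_adacac_sq, ← map_pow, Prod.pow_mk, conj_pow, hb, mul_one,
    mul_inv_cancel, Prod.mk_one_one, map_one]

theorem wreathRecursion_sigma_pow_four (ha : q ga ^ 2 = 1) (hd : q gd ^ 2 = 1)
    (had : q (ga * gd) ^ 4 = 1) {v : F4} (hv : q (v ^ 4) = 1) :
    wreathRecursion q (sigma (v ^ 4)) = 1 := by
  have htheta : q (theta v) ∈ Subgroup.closure {q ga, q gd} := by
    rw [← Set.image_pair, ← MonoidHom.map_closure]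
    exact Subgroup.mem_map_of_mem q (theta_mem_closure v)
  have hpow : q (theta v) ^ 4 = 1 :=
    pow_eq_one_of_mem_closure_pair ha hd (map_mul q ga gd ▸ had) (by decide) htheta
  rw [wreathRecursion_sigma, hv, map_pow, map_pow, hpow, Prod.mk_one_one, map_one]

theorem wreathRecursion_eq_one_of_mem_lysenokRelators {J K : Set ℕ} (hJ : IsLowerSet J)
    (hK : IsLowerSet K) (hJ0 : 0 ∈ J) (hq : ∀ w ∈ lysenokRelators J K, q w = 1) :
    ∀ w ∈ lysenokRelators J K, wreathRecursion q w = 1 := by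
  have hq_basic : ∀ w ∈ basicRelators, q w = 1 := fun w hw ↦ hq w (.inl (.inl hw))
  have ha : q ga ^ 2 = 1 := map_pow q ga 2 ▸ hq_basic _ (by simp [basicRelators])
  have hb : q gb ^ 2 = 1 := map_pow q gb 2 ▸ hq_basic _ (by simp [basicRelators])
  have hd : q gd ^ 2 = 1 := map_pow q gd 2 ▸ hq_basic _ (by simp [basicRelators])
  have had : q (ga * gd) ^ 4 = 1 := map_pow q (ga * gd) 4 ▸ hq _ (.inl (.inr ⟨0, hJ0, rfl⟩))
  have iterate_succ {u : F4} {j : ℕ} (hj : q (sigma^[j] (u ^ 4)) = 1) :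
      wreathRecursion q (sigma^[j + 1] (u ^ 4)) = 1 := by
    rw [Function.iterate_succ_apply']
    rw [iterate_map_pow] at hj ⊢
    exact wreathRecursion_sigma_pow_four ha hd had hj
  rintro w ((hw | ⟨_ | j, hj, rfl⟩) | ⟨_ | j, hj, rfl⟩)
  · exact wreathRecursion_eq_one_of_mem_basicRelators hq_basic w hw
  · exact wreathRecursion_ad_pow_four hb
  · exact iterate_succ (hq _ (.inl (.inr ⟨j, hJ j.le_succ hj, rfl⟩)))
  · exact wreathRecursion_adacac_pow_four ha hb hd
  · exact iterate_succ (hq _ (.inr ⟨j, hK j.le_succ hj, rfl⟩))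

end RelatorImages

section Descent

theorem psi_mem_prod_of_wreathRecursion_eq_one {Rel : Set F4}
    (hRel : ∀ w ∈ Rel,
      wreathRecursion (QuotientGroup.mk' (Subgroup.normalClosure Rel)) w = 1)
    {e : FreeGroup E7} (he : iota e ∈ Subgroup.normalClosure Rel) :
    psi e ∈ (Subgroup.normalClosure Rel).prod (Subgroup.normalClosure Rel) := by
  have hker : Subgroup.normalClosure Rel ≤
      (wreathRecursion (QuotientGroup.mk' (Subgroup.normalClosure Rel))).ker :=
    Subgroup.normalClosure_le_normal hRel
  have h := MonoidHom.mem_ker.mp (hker he)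
  rw [wreathRecursion_iota, map_eq_one_iff _ SemidirectProduct.inl_injective,
    Prod.mk_eq_one] at h
  exact ⟨(QuotientGroup.eq_one_iff _).mp h.1, (QuotientGroup.eq_one_iff _).mp h.2⟩

theorem psiDescends_of_parity_of_wreathRecursion {Rel : Set F4}
    (hparity : ∀ w ∈ Rel, parity w = 1)
    (hRel : ∀ w ∈ Rel,
      wreathRecursion (QuotientGroup.mk' (Subgroup.normalClosure Rel)) w = 1) :
    PsiDescends Rel := by
  let N := Subgroup.normalClosure Rel
  let q : F4 →* F4 ⧸ N := QuotientGroup.mk' N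
  have hpsi : ∀ e, iota e ∈ N → psi e ∈ N.prod N :=
    fun _ he ↦ psi_mem_prod_of_wreathRecursion_eq_one hRel he
  have hker : (q.comp iota).ker ≤ ((q.prodMap q).comp psi).ker := fun e he ↦ by
    obtain ⟨h₁, h₂⟩ := hpsi e ((QuotientGroup.eq_one_iff _).mp he)
    exact Prod.ext ((QuotientGroup.eq_one_iff _).mpr h₁) ((QuotientGroup.eq_one_iff _).mpr h₂)
  refine ⟨?_, hpsi, exists_monoidHom_map_range iota q ((q.prodMap q).comp psi) hker⟩
  rw [range_iota_eq_ker_parity]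
  exact Subgroup.normalClosure_le_normal hparity

end Descent

theorem psi_descends_for_all_levels_general {J K : Set ℕ} (hJ : IsLowerSet J)
    (hK : IsLowerSet K) (hJ0 : 0 ∈ J) : PsiDescends (lysenokRelators J K) :=
  psiDescends_of_parity_of_wreathRecursion
    (fun _ ↦ parity_eq_one_of_mem_lysenokRelators)
    (wreathRecursion_eq_one_of_mem_lysenokRelators hJ hK hJ0 fun w hw ↦
      (QuotientGroup.eq_one_iff w).mpr (Subgroup.subset_normalClosure hw))

/-- for every `i ∈ {1, 2, 3, …} ∪ {∞}`, the map `ψ₀` descends to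
a homomorphism `ψᵢ : H(i) → Γ(i) × Γ(i)`. -/
theorem psi_descends_for_all_levels :
    (∀ i : ℕ, 1 ≤ i → PsiDescends (Rpres i)) ∧ PsiDescends Rinf := by
  refine ⟨fun i hi ↦ ?_, ?_⟩
  · rw [Rpres_eq_lysenokRelators hi]
    exact psi_descends_for_all_levels_general (isLowerSet_Iio i)
      (fun j k hkj hj ↦ (Nat.add_le_add_right hkj 2).trans hj) hi
  · rw [Rinf_eq_lysenokRelators]
    exact psi_descends_for_all_levels_general isLowerSet_univ isLowerSet_univ (Set.mem_univ 0)
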